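/- With the Lie-algebra setup below, suppose the bracket is given by [x₁,x₂] = λ₁x₁ + λ₂x₂ + λ₃x₃, [x₂,x₃] = ν₁x₁ + ν₂x₂ + ν₃x₃, [x₁,x₃] = μ₁x₁ + μ₂x₂ + μ₃x₃, satisfies the Jacobi identity, and the fundamental tensor satisfies the identity F(xₖ,xᵢ,xⱼ) = (1/3)·(g(xₖ,xⱼ)θᵢ + g(xₖ,xᵢ)θⱼ + g̃(xₖ,xⱼ)θ*ᵢ + g̃(xₖ,xᵢ)θ*ⱼ) for all i, j, k. Then μ₁ = ν₂ + λ₃, μ₂ = ν₃ + λ₁, μ₃ = ν₁ + λ₂, and the structure constants satisfy: 2ν₁λ₂ + ν₁² − λ₁ν₂ − ν₂ν₃ − λ₃ν₃ = 0, 2ν₂λ₃ + λ₃² − λ₂ν₃ − λ₁λ₂ − λ₁ν₁ = 0, and −λ₁² + ν₃² + λ₂λ₃ − ν₁ν₂ = 0. -/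

import Mathlib

open scoped BigOperators

/-- The underlying vector space ℝ³. -/
abbrev V := Fin 3 → ℝ

/-- The standard basis `x₁, x₂, x₃` of ℝ³ (indexed from 0). -/
def e (i : Fin 3) : V := Pi.single i 1

/-- The standard inner product `g` on ℝ³ (the basis `e` is orthonormal). -/
def ip (x y : V) : ℝ := ∑ i, x i * y i

/-- The circulant structure `Q`: `Q x₁ = x₂`, `Q x₂ = x₃`, `Q x₃ = x₁`. -/
def Qv (x : V) : V := fun j => x (j - 1)

/-- The associated metric `g̃(y,z) = g(y,Qz) + g(Qy,z)`. -/
def gtil (x y : V) : ℝ := ip x (Qv y) + ip (Qv x) y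

/-- Bilinearity of a map `V → V → V`. -/
def Bilin (f : V → V → V) : Prop :=
  (∀ (a : ℝ) (x y z : V), f (a • x + y) z = a • f x z + f y z) ∧
  (∀ (a : ℝ) (x y z : V), f x (a • y + z) = a • f x y + f x z)

/-- Skew-symmetry of a map `V → V → V`. -/
def Skew (f : V → V → V) : Prop := ∀ x y, f x y = - f y x

/-- The Jacobi identity for a bracket. -/
def Jacobi (br : V → V → V) : Prop :=
  ∀ x y z, br x (br y z) + br y (br z x) + br z (br x y) = 0

/-- The Koszul formula determining the Levi-Civita connection `∇` of the
left-invariant metric `g` on the basis: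
`2g(∇_{xᵢ}xⱼ, xₖ) = g([xᵢ,xⱼ],xₖ) + g([xₖ,xᵢ],xⱼ) + g([xₖ,xⱼ],xᵢ)`. -/
def Koszul (br nabla : V → V → V) : Prop :=
  ∀ i j k : Fin 3, 2 * ip (nabla (e i) (e j)) (e k) =
    ip (br (e i) (e j)) (e k) + ip (br (e k) (e i)) (e j) + ip (br (e k) (e j)) (e i)

/-- The curvature operator `R(x,y)z = ∇ₓ∇_y z − ∇_y∇ₓz − ∇_{[x,y]}z`. -/
def Rop (br nabla : V → V → V) (x y z : V) : V :=
  nabla x (nabla y z) - nabla y (nabla x z) - nabla (br x y) z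

/-- The curvature tensor of type (0,4): `R(x,y,z,u) = g(R(x,y)z, u)`. -/
def Rten (br nabla : V → V → V) (x y z u : V) : ℝ := ip (Rop br nabla x y z) u

/-- The Ricci tensor `ρ(y,z) = Σᵢ R(xᵢ,y,z,xᵢ)`. -/
def ricci (br nabla : V → V → V) (y z : V) : ℝ := ∑ i, Rten br nabla (e i) y z (e i)

/-- The scalar curvature `τ = Σᵢ ρ(xᵢ,xᵢ)`. -/
def scalc (br nabla : V → V → V) : ℝ := ∑ i, ricci br nabla (e i) (e i)

/-- The fundamental tensor `F(x,y,z) = −g̃(∇ₓy, z) − g̃(y, ∇ₓz)`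
(the covariant derivative of `g̃`, which has constant components in this frame). -/
def Fop (nabla : V → V → V) (x y z : V) : ℝ := -(gtil (nabla x y) z) - gtil y (nabla x z)

/-- The Lee form `θₖ = Σᵢ F(xᵢ,xᵢ,xₖ)`. -/
def lee (nabla : V → V → V) (k : Fin 3) : ℝ := ∑ i, Fop nabla (e i) (e i) (e k)

/-- The Lee form `θ*ₖ = Σᵢ F(xᵢ,Qxᵢ,xₖ)`. -/
def leeStar (nabla : V → V → V) (k : Fin 3) : ℝ := ∑ i, Fop nabla (e i) (Qv (e i)) (e k)

theorem ip_e (x : V) (k : Fin 3) : ip x (e k) = x k := by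
  simp [ip, e, Pi.single_apply]

theorem e_ip (x : V) (k : Fin 3) : ip (e k) x = x k := by
  simp [ip, e, Pi.single_apply]

theorem e_app (i j : Fin 3) : e i j = if j = i then 1 else 0 := by
  simp [e, Pi.single_apply]

theorem Qv_e (i : Fin 3) : Qv (e i) = e (i + 1) := by
  funext j
  fin_cases i <;> fin_cases j <;> simp [Qv, e_app] <;> decide

theorem gtil_e (x : V) (k : Fin 3) : gtil x (e k) = x (k + 1) + x (k + 2) := by
  have hk : k - 1 = k + 2 := by fin_cases k <;> rfl
  simp [hk, gtil, Qv_e, ip_e, Qv]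

theorem e_gtil (x : V) (k : Fin 3) : gtil (e k) x = x (k + 1) + x (k + 2) := by
  have hk : k - 1 = k + 2 := by fin_cases k <;> rfl
  simp [hk, gtil, Qv_e, e_ip, Qv]; ring

/-- if the Lie bracket on `(G, g, Q)` has structure constants
`λᵢ, μᵢ, νᵢ` and the fundamental tensor satisfies the characteristic identity
`F(xₖ,xᵢ,xⱼ) = (1/3)(g(xₖ,xⱼ)θᵢ + g(xₖ,xᵢ)θⱼ + g̃(xₖ,xⱼ)θ*ᵢ + g̃(xₖ,xᵢ)θ*ⱼ)`,
then `μ₁ = ν₂ + λ₃`, `μ₂ = ν₃ + λ₁`, `μ₃ = ν₁ + λ₂`, and the structure constants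
satisfy the three quadratic relations. -/
theorem lie_group_structure_constants
    (br : V → V → V) (hbil : Bilin br) (hskew : Skew br) (hjac : Jacobi br)
    (nabla : V → V → V) (hnbil : Bilin nabla) (hkos : Koszul br nabla)
    (l1 l2 l3 m1 m2 m3 n1 n2 n3 : ℝ)
    (h12 : br (e 0) (e 1) = l1 • e 0 + l2 • e 1 + l3 • e 2)
    (h23 : br (e 1) (e 2) = n1 • e 0 + n2 • e 1 + n3 • e 2)
    (h13 : br (e 0) (e 2) = m1 • e 0 + m2 • e 1 + m3 • e 2)
    (hF : ∀ i j k : Fin 3,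
      Fop nabla (e k) (e i) (e j) =
        (1/3) * (ip (e k) (e j) * lee nabla i + ip (e k) (e i) * lee nabla j
          + gtil (e k) (e j) * leeStar nabla i + gtil (e k) (e i) * leeStar nabla j)) :
    (m1 = n2 + l3 ∧ m2 = n3 + l1 ∧ m3 = n1 + l2) ∧
    (2*n1*l2 + n1^2 - l1*n2 - n2*n3 - l3*n3 = 0 ∧
     2*n2*l3 + l3^2 - l2*n3 - l1*l2 - l1*n1 = 0 ∧
     -l1^2 + n3^2 + l2*l3 - n1*n2 = 0) := by
  have hz : ∀ x, br x x = 0 := by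
    intro x
    have h := hskew x x
    funext k
    have h2 := congrFun h k
    simp only [Pi.neg_apply] at h2
    simp only [Pi.zero_apply]
    linarith
  have h21 := hskew (e 1) (e 0)
  have h32 := hskew (e 2) (e 1)
  have h31 := hskew (e 2) (e 0)
  rw [h12] at h21
  rw [h23] at h32
  rw [h13] at h31
  have hb3 : ∀ (x : V) (a b c : ℝ), br x (a • e 0 + b • e 1 + c • e 2)
      = a • br x (e 0) + b • br x (e 1) + c • br x (e 2) := by
    intro x a b c
    have h0 : br x 0 = 0 := by
      have := hbil.2 1 x 0 0
      simpa using this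
    have hs : br x (c • e 2) = c • br x (e 2) := by
      have := hbil.2 c x (e 2) 0
      simpa [h0] using this
    rw [add_assoc, hbil.2, hbil.2, hs, add_assoc]
  have hJ := hjac (e 0) (e 1) (e 2)
  have hneg : ∀ x y, br x (-y) = - br x y := by
    intro x y
    have h0 : br x 0 = 0 := by
      have := hbil.2 1 x 0 0
      simpa using this
    have := hbil.2 (-1) x y 0
    simpa [h0] using this
  rw [h31, h12, h23, hneg, hb3, hb3, hb3, h12, h13, h21, h23, h31, h32, hz, hz, hz] at hJ
  have J0 := congrFun hJ 0
  have J1 := congrFun hJ 1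
  have J2 := congrFun hJ 2
  simp [e_app] at J0 J1 J2
  simp only [Fop, lee, leeStar, Fin.sum_univ_three, Qv_e, ip_e, gtil_e, e_gtil] at hF
  simp only [Koszul, ip_e] at hkos
  have K : ∀ i j k : Fin 3, nabla (e i) (e j) k =
    (br (e i) (e j) k + br (e k) (e i) j + br (e k) (e j) i) / 2 := by
    intro i j k
    have := hkos i j k
    linarith
  simp only [K] at hF
  clear hkos K
  have a1 : (1 : Fin 3) + 1 = 2 := rfl
  have a2 : (1 : Fin 3) + 2 = 0 := rfl
  have a3 : (2 : Fin 3) + 1 = 0 := rfl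
  have a4 : (2 : Fin 3) + 2 = 1 := rfl
  have F000 := hF 0 0 0
  have F001 := hF 0 0 1
  have F002 := hF 0 0 2
  have F010 := hF 0 1 0
  have F011 := hF 0 1 1
  have F012 := hF 0 1 2
  have F020 := hF 0 2 0
  have F021 := hF 0 2 1
  have F022 := hF 0 2 2
  have F110 := hF 1 1 0
  have F111 := hF 1 1 1
  have F112 := hF 1 1 2
  have F120 := hF 1 2 0
  have F121 := hF 1 2 1
  have F122 := hF 1 2 2
  have F220 := hF 2 2 0
  have F221 := hF 2 2 1
  have F222 := hF 2 2 2
  clear hF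
  simp [a1, a2, a3, a4, h12, h13, h23, h21, h31, h32, hz, e_app] at F000 F001 F002 F010 F011 F012 F020 F021 F022 F110 F111 F112 F120 F121 F122 F220 F221 F222
  have M1 : m1 = n2 + l3 := by linarith
  have M2 : m2 = n3 + l1 := by linarith
  have M3 : m3 = n1 + l2 := by linarith
  subst M1 M2 M3
  refine ⟨⟨rfl, rfl, rfl⟩, ?_, ?_, ?_⟩
  · linear_combination -J0
  · linear_combination J2
  · linear_combination J1
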